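/- arXiv:1107.0237 — 3 statements merged into one kernel-verified Lean document; each statement's English description precedes it below -/
import Mathlib

section
/- In a finite decision tree in which the DM has perfect recall and all decision nodes are non-trivial, the following holds (Lemma A.6): if I and I′ are information sets of the DM, s and s′ are strategies, I′ is allowed under both s and s′, and I precedes I′, then I is allowed under both s and s′, and s and s′ make the same choice at I. -/
/-!
Fix nodes `n ∈ I` and `n' ∈ I'` with `n` strictly before `n'`. Perfect recall turns "`I'` is allowed"
into "`n'` is allowed", for `s` and for `s'`. Each strategy therefore allows `n` as well, and at `n`
each must choose the one branch that leads towards `n'`, so the two choices coincide.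
-/


/-- A (finite) decision tree à la Kuhn (Appendix, Definition A.1), with nodes
encoded as histories: a node is the list of branch numbers leading to it from
the root `[]`.  The branches out of a node `h` are numbered `0, …, deg h - 1`
(this canonical numbering realizes the given 1-1 correspondences between the
outgoing branches of nodes in a common information set).  Non-terminal nodes
(`0 < deg`) are partitioned into decision nodes (`isDM`) and chance nodes
(`¬ isDM`), and `info` assigns to each node its information set; the `kuhn`
field says every path from the root to a terminal node crosses each
information set at most once. -/
structure DecisionTree where
  /-- the finite set of nodes (as histories) -/
  nodes : Finset (List ℕ)
  /-- the root belongs to the tree -/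
  root_mem : ([] : List ℕ) ∈ nodes
  /-- the set of nodes is prefix-closed -/
  prefix_closed : ∀ ⦃h h'⦄, h ∈ nodes → h' <+: h → h' ∈ nodes
  /-- whether a node belongs to the decision maker (rather than Nature) -/
  isDM : List ℕ → Prop
  /-- the number of outgoing branches of a node -/
  deg : List ℕ → ℕ
  /-- the branches out of `h` are exactly `h ++ [k]` for `k < deg h` -/
  deg_spec : ∀ ⦃h⦄, h ∈ nodes → ∀ k, (h ++ [k] ∈ nodes ↔ k < deg h)
  /-- the information set label of a node -/
  info : List ℕ → ℕ
  /-- information sets do not mix DM nodes and chance nodes -/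
  info_player : ∀ ⦃h h'⦄, h ∈ nodes → h' ∈ nodes → 0 < deg h → 0 < deg h' →
    info h = info h' → (isDM h ↔ isDM h')
  /-- all nodes in an information set have the same number of outgoing branches -/
  info_deg : ∀ ⦃h h'⦄, h ∈ nodes → h' ∈ nodes → 0 < deg h → 0 < deg h' →
    info h = info h' → deg h = deg h'
  /-- every path from the root to a terminal node crosses each information set
  at most once -/
  kuhn : ∀ ⦃h h'⦄, h ∈ nodes → h' ∈ nodes → 0 < deg h → 0 < deg h' →
    h <+: h' → info h = info h' → h = h'

namespace DecisionTree

variable (T : DecisionTree)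

/-- A strategy for the DM: a choice of outgoing branch at each of the DM's
information sets. -/
def IsStrategy (s : ℕ → ℕ) : Prop :=
  ∀ h ∈ T.nodes, T.isDM h → 0 < T.deg h → s (T.info h) < T.deg h

/-- A state of the world: a choice of outgoing branch at each of Nature's
information sets. -/
def IsState (ω : ℕ → ℕ) : Prop :=
  ∀ h ∈ T.nodes, ¬ T.isDM h → 0 < T.deg h → ω (T.info h) < T.deg h

/-- The unique path induced by the pair `(s, ω)` passes through the node `n`:
every step along the history `n` agrees with the relevant choice. -/
def OnPath (s ω : ℕ → ℕ) (n : List ℕ) : Prop :=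
  n ∈ T.nodes ∧ ∀ p k, p ++ [k] <+: n →
    ((T.isDM p → s (T.info p) = k) ∧ (¬ T.isDM p → ω (T.info p) = k))

/-- The node `n` is allowed under the strategy `s`: for some state `ω`, the
path induced by `(s, ω)` passes through `n`. -/
def AllowedNode (s : ℕ → ℕ) (n : List ℕ) : Prop :=
  ∃ ω, T.IsState ω ∧ T.OnPath s ω n

/-- `i` is (the label of) an information set of the DM. -/
def IsDMInfo (i : ℕ) : Prop :=
  ∃ h ∈ T.nodes, T.isDM h ∧ 0 < T.deg h ∧ T.info h = i

/-- The DM's information set `i` is allowed under the strategy `s`: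
some node in it is allowed under `s`. -/
def AllowedInfo (s : ℕ → ℕ) (i : ℕ) : Prop :=
  ∃ n ∈ T.nodes, T.isDM n ∧ 0 < T.deg n ∧ T.info n = i ∧ T.AllowedNode s n

/-- The DM's information set `i` is allowed under the state `ω`: for some
strategy `s`, the path induced by `(s, ω)` passes through a node of `i`.
Thus `[I] = {ω : AllowedInfoState ω I}`. -/
def AllowedInfoState (ω : ℕ → ℕ) (i : ℕ) : Prop :=
  ∃ s, T.IsStrategy s ∧
    ∃ n ∈ T.nodes, T.isDM n ∧ 0 < T.deg n ∧ T.info n = i ∧ T.OnPath s ω n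

/-- Perfect recall: for every strategy and information set of the DM, one node
of the information set is allowed iff every node of it is. -/
def PerfectRecall : Prop :=
  ∀ s, T.IsStrategy s → ∀ ⦃n n'⦄, n ∈ T.nodes → n' ∈ T.nodes →
    T.isDM n → T.isDM n' → 0 < T.deg n → 0 < T.deg n' → T.info n = T.info n' →
    (T.AllowedNode s n ↔ T.AllowedNode s n')

/-- All decision nodes are non-trivial (at least two outgoing branches). -/
def NonTrivial : Prop :=
  ∀ h ∈ T.nodes, T.isDM h → 0 < T.deg h → 2 ≤ T.deg h

/-- Information set `i` precedes information set `i'`: there are nodes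
`n ∈ i` and `n' ∈ i'` such that the path from the root to `n'` passes
through `n` (strictly). -/
def Precedes (i i' : ℕ) : Prop :=
  ∃ n n', n ∈ T.nodes ∧ n' ∈ T.nodes ∧ T.isDM n ∧ T.isDM n' ∧
    0 < T.deg n ∧ 0 < T.deg n' ∧ T.info n = i ∧ T.info n' = i' ∧
    n <+: n' ∧ n ≠ n'

/-- `i` is an immediate predecessor of `i'`. -/
def ImmPred (i i' : ℕ) : Prop :=
  T.Precedes i i' ∧ ¬ ∃ i'', T.Precedes i i'' ∧ T.Precedes i'' i'

end DecisionTree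

/-- If a node is allowed under `s`, so is every node on the path to it: the same state witnesses
both. -/
theorem DecisionTree.AllowedNode.of_prefix {T : DecisionTree} {s : ℕ → ℕ} {m n : List ℕ}
    (h : T.AllowedNode s n) (hm : m ∈ T.nodes) (hmn : m <+: n) : T.AllowedNode s m := by
  obtain ⟨ω, hω, -, hpath⟩ := h
  exact ⟨ω, hω, hm, fun p k hp => hpath p k (hp.trans hmn)⟩

/-- Under perfect recall, a strategy allowing one node of an information set allows all of them. -/
theorem DecisionTree.AllowedInfo.allowedNode {T : DecisionTree} (hPR : T.PerfectRecall)
    {s : ℕ → ℕ} (hs : T.IsStrategy s) {n : List ℕ} (h : T.AllowedInfo s (T.info n))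
    (hn : n ∈ T.nodes) (hd : T.isDM n) (hp : 0 < T.deg n) : T.AllowedNode s n := by
  obtain ⟨m, hm, hmd, hmp, hmi, hma⟩ := h
  exact (hPR s hs hm hn hmd hd hmp hp hmi).1 hma

/-- A strategy allowing a node strictly after the decision node `n` chooses at `n` the branch
leading to it. -/
theorem DecisionTree.AllowedNode.choice_eq {T : DecisionTree} {s : ℕ → ℕ} {n n' : List ℕ} {k : ℕ}
    (h : T.AllowedNode s n') (hd : T.isDM n) (hk : n ++ [k] <+: n') : s (T.info n) = k := by
  obtain ⟨ω, -, -, hpath⟩ := h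
  exact (hpath n k hk).1 hd

/-- **Lemma A.6.**  In a decision tree with perfect recall in which all
decision nodes are non-trivial: if `I'` is allowed under both strategies `s`
and `s'`, and `I` precedes `I'`, then `I` is allowed under both `s` and `s'`,
and `s` and `s'` make the same choice at `I`. -/
theorem lemma_A6 (T : DecisionTree)
    (hPR : T.PerfectRecall) (hNT : T.NonTrivial)
    (i i' : ℕ) (s s' : ℕ → ℕ)
    (hs : T.IsStrategy s) (hs' : T.IsStrategy s')
    (h1 : T.AllowedInfo s i') (h2 : T.AllowedInfo s' i')
    (hprec : T.Precedes i i') :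
    T.AllowedInfo s i ∧ T.AllowedInfo s' i ∧ s i = s' i := by
  obtain ⟨n, n', hn, hn', hd, hd', hp, hp', rfl, rfl, ⟨t, rfl⟩, hne⟩ := hprec
  cases t with
  | nil => simp at hne
  | cons k t =>
    have hk : n ++ [k] <+: n ++ k :: t := ⟨t, by simp⟩
    have a := h1.allowedNode hPR hs hn' hd' hp'
    have a' := h2.allowedNode hPR hs' hn' hd' hp'
    exact ⟨⟨n, hn, hd, hp, rfl, a.of_prefix hn (List.prefix_append _ _)⟩,
      ⟨n, hn, hd, hp, rfl, a'.of_prefix hn (List.prefix_append _ _)⟩,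
      (a.choice_eq hd hk).trans (a'.choice_eq hd hk).symm⟩
end

section
/- In a finite decision tree in which the DM has perfect recall and all decision nodes are non-trivial, the following holds (Lemma A.7): if I and I′ are information sets of the DM and I′ succeeds I (i.e., I precedes I′), then [I′] ⊆ [I], where for an information set I, [I] denotes the set of states of the world ω such that I is allowed under ω. -/
/-- **Lemma A.7.**  In a decision tree with perfect recall in which all
decision nodes are non-trivial: if the information set `I'` succeeds `I`
(i.e. `I` precedes `I'`), then `[I'] ⊆ [I]`, i.e. every state under which
`I'` is allowed also allows `I`. -/
theorem lemma_A7 (T : DecisionTree)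
    (hPR : T.PerfectRecall) (hNT : T.NonTrivial)
    (i i' : ℕ) (hprec : T.Precedes i i')
    (ω : ℕ → ℕ) (hω : T.IsState ω)
    (h : T.AllowedInfoState ω i') :
    T.AllowedInfoState ω i := by
  classical
  obtain ⟨n, n', hn, hn', hnD, hnD', hnd, hnd', hni, hni', hpre, hne⟩ := hprec
  obtain ⟨s, hs, m, hm, hmD, hmd, hmi, hmp⟩ := h
  obtain ⟨t, rfl⟩ := hpre
  cases t with
  | nil => simp at hne
  | cons k t =>
  by_contra hcon
  have hcross : ∀ p j, p ++ [j] <+: m → T.isDM p → T.info p ≠ i := by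
    intro p j hp hpD hpi
    have hpm : p <+: m := (List.prefix_append p [j]).trans hp
    have hpN := T.prefix_closed hm hpm
    have hpd : 0 < T.deg p :=
      (Nat.zero_le j).trans_lt ((T.deg_spec hpN j).1 (T.prefix_closed hm hp))
    exact hcon ⟨s, hs, p, hpN, hpD, hpd, hpi, hpN, fun q l hq => hmp.2 q l (hq.trans hpm)⟩
  obtain ⟨k', hk', hkk⟩ : ∃ k', k' < T.deg n ∧ k' ≠ k := by
    have h2 := hNT n hn hnD hnd
    by_cases hk : k = 0
    · exact ⟨1, by omega, by omega⟩
    · exact ⟨0, by omega, by omega⟩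
  have hs' : T.IsStrategy (Function.update s i k') := by
    intro q hq hqD hqd
    by_cases hqi : T.info q = i
    · rw [hqi, Function.update_self, T.info_deg hq hn hqd hnd (hqi.trans hni.symm)]
      exact hk'
    · rw [Function.update_of_ne hqi]
      exact hs q hq hqD hqd
  have hallow : T.AllowedNode (Function.update s i k') m := by
    refine ⟨ω, hω, hm, fun p j hp => ⟨fun hpD => ?_, (hmp.2 p j hp).2⟩⟩
    rw [Function.update_of_ne (hcross p j hp hpD)]
    exact (hmp.2 p j hp).1 hpD
  obtain ⟨ω', -, -, hp'⟩ :=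
    (hPR _ hs' hm hn' hmD hnD' hmd hnd' (hmi.trans hni'.symm)).1 hallow
  have hk := (hp' n k ⟨t, by simp⟩).1 hnD
  rw [hni, Function.update_self] at hk
  exact hkk hk
end

section
/- In a finite decision tree in which the DM has perfect recall and all decision nodes are non-trivial, the precedence relation on the DM's information sets is irreflexive and transitive. -/
namespace DecisionTree

lemma mem_and_lt_deg (T : DecisionTree) {n p : List ℕ} {k : ℕ} (hn : n ∈ T.nodes)
    (h : p ++ [k] <+: n) : p ∈ T.nodes ∧ k < T.deg p := by
  have hpk := T.prefix_closed hn h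
  have hp := T.prefix_closed hpk (List.prefix_append p [k])
  exact ⟨hp, (T.deg_spec hp k).1 hpk⟩

/-- A single function on information-set labels which is admissible at every non-terminal node,
for the DM and for Nature alike, and which makes the choices leading to `n`. -/
lemma exists_choice (T : DecisionTree) {n : List ℕ} (hn : n ∈ T.nodes) :
    ∃ f : ℕ → ℕ, (∀ h ∈ T.nodes, 0 < T.deg h → f (T.info h) < T.deg h) ∧
      ∀ p k, p ++ [k] <+: n → f (T.info p) = k := by
  classical
  let f : ℕ → ℕ := fun j =>
    if h : ∃ k p, p ++ [k] <+: n ∧ T.info p = j then h.choose else 0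
  refine ⟨f, ?_, ?_⟩
  · intro h hh hd
    by_cases hex : ∃ k p, p ++ [k] <+: n ∧ T.info p = T.info h
    · obtain ⟨p, hp, hi⟩ := hex.choose_spec
      obtain ⟨hpm, hlt⟩ := T.mem_and_lt_deg hn hp
      have hdeg := T.info_deg hpm hh (by omega) hd hi
      simp only [f, dif_pos hex]
      omega
    · simpa only [f, dif_neg hex] using hd
  · intro p k hp
    have hex : ∃ k' p', p' ++ [k'] <+: n ∧ T.info p' = T.info p := ⟨k, p, hp, rfl⟩
    obtain ⟨q, hq, hi⟩ := hex.choose_spec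
    simp only [f, dif_pos hex]
    generalize hex.choose = m at hq
    obtain ⟨hpm, hpd⟩ := T.mem_and_lt_deg hn hp
    obtain ⟨hqm, hqd⟩ := T.mem_and_lt_deg hn hq
    have hpn : p <+: n := (List.prefix_append p [k]).trans hp
    have hqn : q <+: n := (List.prefix_append q [m]).trans hq
    have hpq : q = p := by
      rcases List.prefix_or_prefix_of_prefix hqn hpn with h | h
      · exact T.kuhn hqm hpm (by omega) (by omega) h hi
      · exact (T.kuhn hpm hqm (by omega) (by omega) h hi.symm).symm
    subst hpq
    have := (List.prefix_of_prefix_length_le hq hp (by simp)).eq_of_length (by simp)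
    simpa using this

end DecisionTree

/-- In a decision tree with perfect recall in which all decision nodes are
non-trivial, the precedence relation on the DM's information sets is
irreflexive and transitive. -/
theorem precedes_irrefl_and_trans (T : DecisionTree)
    (hPR : T.PerfectRecall) (hNT : T.NonTrivial) :
    (∀ i, ¬ T.Precedes i i) ∧
    (∀ i i' i'', T.Precedes i i' → T.Precedes i' i'' → T.Precedes i i'') := by
  classical
  refine ⟨?_, ?_⟩
  · rintro i ⟨n, n', hn, hn', -, -, hd, hd', hi, hi', hpre, hne⟩
    exact hne (T.kuhn hn hn' hd hd' hpre (hi.trans hi'.symm))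
  · rintro i i' i'' ⟨n₁, n₁', hn₁, hn₁', hD₁, hD₁', hd₁, hd₁', hi₁, hi₁', hpre₁, hne₁⟩
      ⟨n₂, n₂', hn₂, hn₂', hD₂, hD₂', hd₂, hd₂', hi₂, hi₂', hpre₂, hne₂⟩
    by_contra hcon
    -- `k` is the branch leading from `n₁` to `n₁'`.
    obtain ⟨k, hk⟩ : ∃ k, n₁ ++ [k] <+: n₁' := by
      obtain ⟨t, rfl⟩ := hpre₁
      cases t with
      | nil => simp at hne₁
      | cons k t => exact ⟨k, t, by simp⟩
    obtain ⟨c, hc, hck⟩ : ∃ c, c < T.deg n₁ ∧ c ≠ k := by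
      have h2 := hNT n₁ hn₁ hD₁ hd₁
      by_cases h : k = 0
      · exact ⟨1, by omega, by omega⟩
      · exact ⟨0, by omega, by omega⟩
    obtain ⟨f, hf, hfn⟩ := T.exists_choice hn₂
    have hs : T.IsStrategy (Function.update f i c) := by
      intro h hh _ hd
      by_cases hi : T.info h = i
      · have := T.info_deg hh hn₁ hd hd₁ (hi.trans hi₁.symm)
        rw [hi, Function.update_self]
        omega
      · rw [Function.update_of_ne hi]
        exact hf h hh hd
    have hallow : T.AllowedNode (Function.update f i c) n₂ := by
      refine ⟨f, fun h hh _ hd => hf h hh hd, hn₂, fun p m hp => ⟨fun hDp => ?_, fun _ => hfn p m hp⟩⟩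
      obtain ⟨hpm, hlt⟩ := T.mem_and_lt_deg hn₂ hp
      have hpi : T.info p ≠ i := by
        intro hpi
        have hp' := hp.trans hpre₂
        refine hcon ⟨p, n₂', hpm, hn₂', hDp, hD₂', by omega, hd₂', hpi, hi₂',
          (List.prefix_append p [m]).trans hp', ?_⟩
        rintro rfl
        simpa using hp'.length_le
      rw [Function.update_of_ne hpi]
      exact hfn p m hp
    obtain ⟨ω, -, -, hω⟩ :=
      (hPR _ hs hn₂ hn₁' hD₂ hD₁' hd₂ hd₁' (hi₂.trans hi₁'.symm)).1 hallow
    have := (hω n₁ k hk).1 hD₁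
    rw [hi₁, Function.update_self] at this
    exact hck this
end
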